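/- Fix an integer r ≥ 2. For L > 0 define J_r(L) := (1/(2π)^{r−1}) ∫_{[−π,π]^{r−1}} g_L(t_1) ⋯ g_L(t_{r−1}) · g_L(−(t_1 + … + t_{r−1})) dt_1 … dt_{r−1}, where g_L(t) := e^{L(e^{it} − 1)} / Γ(e^{it}) (with 1/Γ the entire reciprocal Gamma function). Then L^{(r−1)/2} · J_r(L) → c_r as L → ∞, where c_r = 1 / ((2π)^{(r−1)/2} · √r); that is, J_r(L) ∼ c_r / L^{(r−1)/2}. -/

import Mathlib

open MeasureTheory

/-- `g_L(t) = e^{L(e^{it} - 1)} / Γ(e^{it})`.  (Since Mathlib's `Complex.Gamma`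
vanishes at the poles `0, -1, -2, …`, the quotient coincides with the product of
`e^{L(e^{it}-1)}` with the entire reciprocal Gamma function evaluated at `e^{it}`.) -/
noncomputable def gFun (L t : ℝ) : ℂ :=
  Complex.exp ((L : ℂ) * (Complex.exp ((t : ℂ) * Complex.I) - 1)) /
    Complex.Gamma (Complex.exp ((t : ℂ) * Complex.I))

/-- `J_r(L)`: the value at `0` of the `r`-fold convolution of the `2π`-periodic
function `g_L` with itself, written as an integral over the cube `[-π,π]^{r-1}`. -/
noncomputable def Jr (r : ℕ) (L : ℝ) : ℂ :=
  ((1 / (2 * Real.pi) ^ (r - 1) : ℝ) : ℂ) *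
    ∫ t : Fin (r - 1) → ℝ in Set.univ.pi fun _ => Set.Icc (-Real.pi) Real.pi,
      (∏ j, gFun L (t j)) * gFun L (-(∑ j, t j))

lemma aux_fourier (t : ℝ) :
    ∫ x : ℝ, Complex.exp (Complex.I * t * x) * Complex.exp (-(1 / 2 : ℂ) * (x : ℂ) ^ 2) =
      (Real.sqrt (2 * Real.pi) : ℂ) * Complex.exp (-(1 / 2 : ℂ) * (t : ℂ) ^ 2) := by
  rw [fourierIntegral_gaussian (by norm_num) (t : ℂ)]
  congr 1
  · rw [Real.sqrt_eq_rpow, Complex.ofReal_cpow (by positivity)]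
    push_cast
    congr 1
    ring
  · congr 1
    ring

lemma aux_gauss_real (n : ℕ) :
    ∫ x : ℝ, Complex.exp (-((n + 1 : ℝ) / 2 : ℝ) * (x : ℂ) ^ 2) =
      (Real.sqrt (2 * Real.pi) / Real.sqrt (n + 1) : ℝ) := by
  have h := integral_gaussian ((n + 1 : ℝ) / 2)
  have h2 : (fun x : ℝ => Complex.exp (-((n + 1 : ℝ) / 2 : ℝ) * (x : ℂ) ^ 2)) =
      fun x : ℝ => ((Real.exp (-((n + 1 : ℝ) / 2) * x ^ 2) : ℝ) : ℂ) := by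
    funext x
    push_cast
    rfl
  rw [h2, integral_complex_ofReal, h, ← Real.sqrt_div (by positivity)]
  congr 2
  field_simp

lemma aux_int1 : Integrable (fun x : ℝ => Complex.exp (-(1 / 2 : ℂ) * (x : ℂ) ^ 2)) :=
  integrable_cexp_neg_mul_sq (by norm_num)

lemma aux_gauss (n : ℕ) :
    ∫ s : Fin n → ℝ, (∏ j, Complex.exp (-(1 / 2 : ℂ) * (s j : ℂ) ^ 2)) *
      Complex.exp (-(1 / 2 : ℂ) * ((∑ j, s j : ℝ) : ℂ) ^ 2) =
      (Real.sqrt (2 * Real.pi) ^ n / Real.sqrt (n + 1) : ℝ) := by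
  have hK : (Real.sqrt (2 * Real.pi) : ℂ) ≠ 0 := by
    have : 0 < Real.sqrt (2 * Real.pi) := by positivity
    exact_mod_cast this.ne'
  apply mul_left_cancel₀ hK
  rw [← integral_const_mul]
  have e1 : ∀ s : Fin n → ℝ, (Real.sqrt (2 * Real.pi) : ℂ) *
      ((∏ j, Complex.exp (-(1 / 2 : ℂ) * (s j : ℂ) ^ 2)) *
        Complex.exp (-(1 / 2 : ℂ) * ((∑ j, s j : ℝ) : ℂ) ^ 2)) =
      ∫ u : ℝ, (∏ j, Complex.exp (-(1 / 2 : ℂ) * (s j : ℂ) ^ 2)) *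
        (Complex.exp (Complex.I * (∑ j, s j : ℝ) * u) *
          Complex.exp (-(1 / 2 : ℂ) * (u : ℂ) ^ 2)) := by
    intro s
    rw [integral_const_mul, aux_fourier]
    ring
  simp_rw [e1]
  rw [integral_integral_swap]
  · have e2 : ∀ u : ℝ, (∫ s : Fin n → ℝ, (∏ j, Complex.exp (-(1 / 2 : ℂ) * (s j : ℂ) ^ 2)) *
        (Complex.exp (Complex.I * (∑ j, s j : ℝ) * u) *
          Complex.exp (-(1 / 2 : ℂ) * (u : ℂ) ^ 2))) =
        (Real.sqrt (2 * Real.pi) : ℂ) ^ n *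
          Complex.exp (-((n + 1 : ℝ) / 2 : ℝ) * (u : ℂ) ^ 2) := by
      intro u
      have e3 : ∀ s : Fin n → ℝ, (∏ j, Complex.exp (-(1 / 2 : ℂ) * (s j : ℂ) ^ 2)) *
        (Complex.exp (Complex.I * (∑ j, s j : ℝ) * u) *
          Complex.exp (-(1 / 2 : ℂ) * (u : ℂ) ^ 2)) =
          (∏ j, (Complex.exp (Complex.I * u * (s j)) *
            Complex.exp (-(1 / 2 : ℂ) * (s j : ℂ) ^ 2))) *
          Complex.exp (-(1 / 2 : ℂ) * (u : ℂ) ^ 2) := by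
        intro s
        rw [Finset.prod_mul_distrib, ← Complex.exp_sum (f := fun j => Complex.I * u * (s j)),
          ← Finset.mul_sum]
        push_cast
        rw [show Complex.I * (∑ j, (s j : ℂ)) * u = Complex.I * u * ∑ j, (s j : ℂ) by ring]
        ring
      simp_rw [e3]
      rw [integral_mul_const, integral_fintype_prod_volume_eq_pow
        (fun x : ℝ => Complex.exp (Complex.I * u * x) *
            Complex.exp (-(1 / 2 : ℂ) * (x : ℂ) ^ 2)), aux_fourier, Fintype.card_fin, mul_pow,
        ← Complex.exp_nat_mul, mul_assoc, ← Complex.exp_add]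
      congr 2
      push_cast
      ring
    simp_rw [e2]
    rw [integral_const_mul, aux_gauss_real]
    push_cast
    ring
  · have hb : Integrable (fun z : (Fin n → ℝ) × ℝ =>
        (∏ j, Complex.exp (-(1 / 2 : ℂ) * (z.1 j : ℂ) ^ 2)) *
          Complex.exp (-(1 / 2 : ℂ) * (z.2 : ℂ) ^ 2)) (volume.prod volume) :=
      (Integrable.fintype_prod (fun _ => aux_int1)).mul_prod aux_int1
    refine hb.mono ?_ ?_
    · apply Continuous.aestronglyMeasurable
      unfold Function.uncurry
      fun_prop
    · refine Filter.Eventually.of_forall fun z => ?_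
      simp only [Function.uncurry, norm_mul]
      rw [show Complex.I * ((∑ j, z.1 j : ℝ) : ℂ) * (z.2 : ℂ) =
        (((∑ j, z.1 j) * z.2 : ℝ) : ℂ) * Complex.I by push_cast; ring,
        Complex.norm_exp_ofReal_mul_I, one_mul]

lemma aux_bound : ∃ C : ℝ, 0 ≤ C ∧ ∀ t : ℝ,
    ‖(Complex.Gamma (Complex.exp ((t : ℂ) * Complex.I)))⁻¹‖ ≤ C := by
  obtain ⟨C, hC⟩ := (isCompact_sphere (0 : ℂ) 1).exists_bound_of_continuousOn
    (Complex.differentiable_one_div_Gamma.continuous.continuousOn)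
  have h : ∀ t : ℝ, ‖(Complex.Gamma (Complex.exp ((t : ℂ) * Complex.I)))⁻¹‖ ≤ C := fun t =>
    hC _ (by simp [Complex.norm_exp_ofReal_mul_I])
  exact ⟨C, (norm_nonneg _).trans (h 0), h⟩

lemma aux_g_norm (C : ℝ) (hC : ∀ t : ℝ,
    ‖(Complex.Gamma (Complex.exp ((t : ℂ) * Complex.I)))⁻¹‖ ≤ C) (L t : ℝ) :
    ‖gFun L t‖ ≤ C * Real.exp (L * (Real.cos t - 1)) := by
  rw [gFun, div_eq_mul_inv, norm_mul, mul_comm, Complex.norm_exp]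
  have : ((L : ℂ) * (Complex.exp ((t : ℂ) * Complex.I) - 1)).re = L * (Real.cos t - 1) := by
    rw [Complex.re_ofReal_mul, Complex.sub_re, Complex.exp_ofReal_mul_I_re, Complex.one_re]
  rw [this]
  gcongr
  exact hC t

lemma aux_g_cont (L : ℝ) : Continuous (gFun L) := by
  unfold gFun
  simp_rw [div_eq_mul_inv]
  refine Continuous.mul (by fun_prop) ?_
  exact Complex.differentiable_one_div_Gamma.continuous.comp
    (f := fun t : ℝ => Complex.exp ((t : ℂ) * Complex.I)) (by fun_prop)

/-- the phase-corrected function -/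
noncomputable def hFun (L t : ℝ) : ℂ := gFun L t * Complex.exp (-((L * t : ℝ) : ℂ) * Complex.I)

lemma aux_prod (n : ℕ) (L : ℝ) (t : Fin n → ℝ) :
    (∏ j, gFun L (t j)) * gFun L (-(∑ j, t j)) =
      (∏ j, hFun L (t j)) * hFun L (-(∑ j, t j)) := by
  unfold hFun
  rw [Finset.prod_mul_distrib, ← Complex.exp_sum, mul_mul_mul_comm, ← Complex.exp_add]
  rw [← Finset.sum_mul, Finset.sum_neg_distrib]
  push_cast
  rw [← Finset.mul_sum]
  ring_nf
  simp

lemma aux_exponent (s : ℝ) : Filter.Tendsto (fun L : ℝ =>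
    (L : ℂ) * (Complex.exp (((((Real.sqrt L)⁻¹ * s : ℝ)) : ℂ) * Complex.I) - 1
      - (((Real.sqrt L)⁻¹ * s : ℝ) : ℂ) * Complex.I))
    Filter.atTop (nhds (-(1 / 2 : ℂ) * (s : ℂ) ^ 2)) := by
  have hw : Filter.Tendsto (fun L : ℝ => (Real.sqrt L)⁻¹) Filter.atTop (nhds 0) :=
    tendsto_inv_atTop_zero.comp Real.tendsto_sqrt_atTop
  rw [tendsto_iff_norm_sub_tendsto_zero]
  have hlim : Filter.Tendsto (fun L : ℝ => |s| ^ 3 * (Real.sqrt L)⁻¹) Filter.atTop (nhds 0) := by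
    simpa using hw.const_mul (|s| ^ 3)
  have hsm : ∀ᶠ L : ℝ in Filter.atTop, |(Real.sqrt L)⁻¹ * s| < 1 := by
    have h0 : Filter.Tendsto (fun L : ℝ => |(Real.sqrt L)⁻¹ * s|) Filter.atTop (nhds 0) := by
      simpa using (hw.mul_const s).abs
    exact h0.eventually_lt_const one_pos
  refine squeeze_zero' (Filter.Eventually.of_forall fun _ => norm_nonneg _) ?_ hlim
  filter_upwards [hsm, Filter.eventually_gt_atTop 0] with L h1 h2
  set w := (Real.sqrt L)⁻¹ with hwdef
  have hwpos : 0 < w := by positivity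
  have hLw : L * w ^ 2 = 1 := by
    rw [hwdef, inv_pow, Real.sq_sqrt h2.le]
    field_simp
  have hz : ‖((w * s : ℝ) : ℂ) * Complex.I‖ = |w * s| := by simp
  have hb := Complex.exp_bound (x := ((w * s : ℝ) : ℂ) * Complex.I) (by rw [hz]; exact h1.le)
    (n := 3) (by norm_num)
  rw [hz] at hb
  have e : (L : ℂ) * (Complex.exp (((w * s : ℝ) : ℂ) * Complex.I) - 1
      - ((w * s : ℝ) : ℂ) * Complex.I) - (-(1 / 2 : ℂ) * (s : ℂ) ^ 2) =
      (L : ℂ) * (Complex.exp (((w * s : ℝ) : ℂ) * Complex.I) -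
        ∑ m ∈ Finset.range 3, (((w * s : ℝ) : ℂ) * Complex.I) ^ m / (m.factorial : ℂ)) := by
    have hc : (L : ℂ) * (w : ℂ) ^ 2 = 1 := by exact_mod_cast hLw
    simp only [Finset.sum_range_succ, Finset.sum_range_zero, Nat.factorial]
    push_cast
    linear_combination (-(1 / 2 : ℂ) * (s : ℂ) ^ 2) * hc +
      (1 / 2 : ℂ) * L * w ^ 2 * s ^ 2 * Complex.I_sq
  rw [e, norm_mul, Complex.norm_real, Real.norm_eq_abs, abs_of_pos h2]
  calc L * _ ≤ L * (|w * s| ^ 3 * ((Nat.succ 3 : ℕ) * ((Nat.factorial 3 : ℕ) * (3 : ℕ) : ℝ)⁻¹)) := by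
        gcongr
    _ ≤ L * (|w * s| ^ 3 * 1) := by
        gcongr
        norm_num [Nat.factorial]
    _ = (L * w ^ 2) * (|s| ^ 3 * w) := by
        rw [abs_mul, abs_of_pos hwpos]
        ring
    _ = |s| ^ 3 * w := by rw [hLw, one_mul]

lemma aux_h_lim (s : ℝ) : Filter.Tendsto (fun L : ℝ => hFun L ((Real.sqrt L)⁻¹ * s))
    Filter.atTop (nhds (Complex.exp (-(1 / 2 : ℂ) * (s : ℂ) ^ 2))) := by
  have hw : Filter.Tendsto (fun L : ℝ => (Real.sqrt L)⁻¹ * s) Filter.atTop (nhds 0) := by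
    simpa using (tendsto_inv_atTop_zero.comp Real.tendsto_sqrt_atTop).mul_const s
  have hG : Continuous fun t : ℝ => (Complex.Gamma (Complex.exp ((t : ℂ) * Complex.I)))⁻¹ :=
    Complex.differentiable_one_div_Gamma.continuous.comp
      (f := fun t : ℝ => Complex.exp ((t : ℂ) * Complex.I)) (by fun_prop)
  have h1 := (hG.tendsto 0).comp hw
  have h2 := (Complex.continuous_exp.tendsto _).comp (aux_exponent s)
  have h3 := h2.mul h1
  simp only [Complex.ofReal_zero, zero_mul, Complex.exp_zero, Complex.Gamma_one, inv_one,
    mul_one] at h3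
  refine h3.congr fun L => ?_
  simp only [Function.comp, hFun, gFun]
  rw [div_eq_mul_inv, mul_right_comm, ← Complex.exp_add]
  congr 2
  push_cast
  ring

lemma aux_h_norm (L t : ℝ) : ‖hFun L t‖ = ‖gFun L t‖ := by
  rw [hFun, norm_mul, ← Complex.ofReal_neg, Complex.norm_exp_ofReal_mul_I, mul_one]

lemma aux_h_cont (L : ℝ) : Continuous (hFun L) := by
  unfold hFun
  exact (aux_g_cont L).mul (by fun_prop)

lemma aux_main (n : ℕ) : Filter.Tendsto (fun L : ℝ => ∫ s : Fin n → ℝ,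
    (Set.univ.pi fun _ => Set.Icc (-Real.pi) Real.pi).indicator
      (fun t : Fin n → ℝ => (∏ j, hFun L (t j)) * hFun L (-(∑ j, t j))) ((Real.sqrt L)⁻¹ • s))
    Filter.atTop (nhds ((Real.sqrt (2 * Real.pi) ^ n / Real.sqrt (n + 1) : ℝ) : ℂ)) := by
  rw [← aux_gauss]
  obtain ⟨C, hC0, hC⟩ := aux_bound
  have hS : MeasurableSet (Set.univ.pi fun _ : Fin n => Set.Icc (-Real.pi) Real.pi) :=
    MeasurableSet.univ_pi fun _ => measurableSet_Icc
  refine tendsto_integral_filter_of_dominated_convergence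
    (fun s => (∏ j, (C * Real.exp (-(2 / Real.pi ^ 2) * s j ^ 2))) * C) ?_ ?_ ?_ ?_
  · refine Filter.Eventually.of_forall fun L => ?_
    apply Measurable.aestronglyMeasurable
    refine Measurable.comp (Measurable.indicator ?_ hS) (by fun_prop)
    apply Continuous.measurable
    have := aux_h_cont L
    fun_prop
  · filter_upwards [Filter.eventually_gt_atTop 0] with L hL
    refine Filter.Eventually.of_forall fun s => ?_
    by_cases hs : ((Real.sqrt L)⁻¹ • s) ∈ (Set.univ.pi fun _ : Fin n => Set.Icc (-Real.pi) Real.pi)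
    · rw [Set.indicator_of_mem hs, norm_mul, norm_prod]
      gcongr with j hj
      · have hj := hs j (Set.mem_univ j)
        simp only [Pi.smul_apply, smul_eq_mul] at hj ⊢
        rw [aux_h_norm]
        refine (aux_g_norm C hC L _).trans ?_
        refine mul_le_mul_of_nonneg_left (Real.exp_le_exp.mpr ?_) hC0
        have hq := Real.cos_le_one_sub_mul_cos_sq (abs_le.mpr hj)
        have hLw : L * ((Real.sqrt L)⁻¹ * s j) ^ 2 = s j ^ 2 := by
          rw [mul_pow, inv_pow, Real.sq_sqrt hL.le]
          field_simp
        calc _ ≤ L * (1 - 2 / Real.pi ^ 2 * ((Real.sqrt L)⁻¹ * s j) ^ 2 - 1) := by gcongr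
          _ = -(2 / Real.pi ^ 2) * (L * ((Real.sqrt L)⁻¹ * s j) ^ 2) := by ring
          _ = _ := by rw [hLw]
      · rw [aux_h_norm]
        refine (aux_g_norm C hC L _).trans ?_
        refine mul_le_of_le_one_right hC0 (Real.exp_le_one_iff.mpr ?_)
        exact mul_nonpos_of_nonneg_of_nonpos hL.le (sub_nonpos.mpr (Real.cos_le_one _))
    · rw [Set.indicator_of_notMem hs, norm_zero]
      positivity
  · apply Integrable.mul_const
    exact Integrable.fintype_prod (f := fun (_ : Fin n) (x : ℝ) =>
      C * Real.exp (-(2 / Real.pi ^ 2) * x ^ 2))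
      (fun _ => (integrable_exp_neg_mul_sq (by positivity)).const_mul C)
  · refine Filter.Eventually.of_forall fun s => ?_
    have hlim : Filter.Tendsto (fun L : ℝ => (∏ j, hFun L ((Real.sqrt L)⁻¹ * s j)) *
        hFun L ((Real.sqrt L)⁻¹ * (-(∑ j, s j)))) Filter.atTop
        (nhds ((∏ j, Complex.exp (-(1 / 2 : ℂ) * (s j : ℂ) ^ 2)) *
          Complex.exp (-(1 / 2 : ℂ) * ((∑ j, s j : ℝ) : ℂ) ^ 2))) := by
      refine (tendsto_finsetProd _ fun j _ => aux_h_lim (s j)).mul ?_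
      have := aux_h_lim (-(∑ j, s j))
      rwa [Complex.ofReal_neg, neg_sq] at this
    refine hlim.congr' ?_
    have hin : ∀ᶠ L : ℝ in Filter.atTop, ∀ j, |(Real.sqrt L)⁻¹ * s j| < Real.pi := by
      rw [Filter.eventually_all]
      intro j
      have h0 : Filter.Tendsto (fun L : ℝ => |(Real.sqrt L)⁻¹ * s j|) Filter.atTop (nhds 0) := by
        simpa using ((tendsto_inv_atTop_zero.comp Real.tendsto_sqrt_atTop).mul_const (s j)).abs
      exact h0.eventually_lt_const Real.pi_pos
    filter_upwards [hin] with L hL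
    rw [Set.indicator_of_mem]
    · simp only [Pi.smul_apply, smul_eq_mul, mul_neg, Finset.mul_sum]
    · intro j _
      exact abs_le.mp (hL j).le

theorem stmt_8 (r : ℕ) (hr : 2 ≤ r) :
    Filter.Tendsto (fun L : ℝ => ((L ^ (((r : ℝ) - 1) / 2) : ℝ) : ℂ) * Jr r L)
      Filter.atTop
      (nhds (((1 / ((2 * Real.pi) ^ (((r : ℝ) - 1) / 2) * Real.sqrt r) : ℝ) : ℂ)) ) := by
  obtain ⟨n, rfl⟩ : ∃ n, r = n + 1 := ⟨r - 1, by omega⟩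
  have hpow : ∀ x : ℝ, 0 ≤ x → x ^ ((((n + 1 : ℕ) : ℝ) - 1) / 2) = Real.sqrt x ^ n := by
    intro x hx
    rw [Real.sqrt_eq_rpow, ← Real.rpow_natCast, ← Real.rpow_mul hx]
    congr 1
    push_cast
    ring
  have hm := (aux_main n).const_mul ((1 / (2 * Real.pi) ^ n : ℝ) : ℂ)
  have hK : 0 < Real.sqrt (2 * Real.pi) := by positivity
  have hval : ((1 / ((2 * Real.pi) ^ ((((n + 1 : ℕ) : ℝ) - 1) / 2) *
      Real.sqrt ((n + 1 : ℕ) : ℝ)) : ℝ) : ℂ) = ((1 / (2 * Real.pi) ^ n : ℝ) : ℂ) *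
      ((Real.sqrt (2 * Real.pi) ^ n / Real.sqrt (n + 1) : ℝ) : ℂ) := by
    rw [hpow _ (by positivity), ← Complex.ofReal_mul]
    congr 1
    have : (2 * Real.pi) ^ n = Real.sqrt (2 * Real.pi) ^ n * Real.sqrt (2 * Real.pi) ^ n := by
      rw [← mul_pow, Real.mul_self_sqrt (by positivity)]
    rw [this]
    push_cast
    field_simp
  rw [hval]
  refine hm.congr' ?_
  filter_upwards [Filter.eventually_gt_atTop 0] with L hL
  rw [Measure.integral_comp_smul volume _ ((Real.sqrt L)⁻¹), hpow L hL.le]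
  have hS : MeasurableSet (Set.univ.pi fun _ : Fin n => Set.Icc (-Real.pi) Real.pi) :=
    MeasurableSet.univ_pi fun _ => measurableSet_Icc
  rw [integral_indicator hS, Module.finrank_fin_fun, inv_pow, inv_inv,
    abs_of_nonneg (by positivity)]
  unfold Jr
  simp only [Nat.add_sub_cancel, aux_prod]
  rw [Complex.real_smul]
  exact mul_left_comm _ _ _
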